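/- Let V be a vertex operator algebra with V = ⊕_{n∈ℕ} V_{(n)} and V_{(0)} = ℂ1, and let W be an ordinary V-module with W = ⊕_{n∈ℕ} W_{(h+n)} for some h ∈ ℂ. Let W⁰ be a graded subspace of W with W = W⁰ + B(W). Then the image of W⁰ in A(W) = W/O(W) generates A(W) as an A(V)-bimodule. In particular, if dim W/B(W) < ∞, then A(W) is a finitely generated A(V)-bimodule. -/

import Mathlib

noncomputable section

/-- The generalized binomial coefficient `C(m, i)` for `m ∈ ℤ`, `i ∈ ℕ`,
as a complex number: `m(m-1)⋯(m-i+1)/i!`. -/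
def cchoose (m : ℤ) (i : ℕ) : ℂ :=
  (∏ j ∈ Finset.range i, ((m : ℂ) - (j : ℂ))) / (Nat.factorial i : ℂ)

/-- A vertex operator algebra `V = ⊕ₙ V₍ₙ₎` over `ℂ`.  The vertex operator map is
recorded through its modes `op u n v = uₙ v` (so `Y(u,x)v = Σₙ uₙv x^{-n-1}`), with
vacuum `one`, conformal vector `omega` (with `L(k) = ω_{k+1}`), central charge `cc`,
weight grading `wtSpace` with projections `proj`.  The Jacobi identity is recorded in
the equivalent form of the Borcherds identity on modes. -/
structure VOA where
  carrier : Type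
  [grp : AddCommGroup carrier]
  [mdl : Module ℂ carrier]
  op : carrier → ℤ → carrier → carrier
  one : carrier
  omega : carrier
  wtSpace : ℤ → Submodule ℂ carrier
  proj : ℤ → carrier → carrier
  cc : ℂ
  op_linear_left : ∀ (n : ℤ) (w : carrier), IsLinearMap ℂ fun u => op u n w
  op_linear_right : ∀ (u : carrier) (n : ℤ), IsLinearMap ℂ (op u n)
  trunc : ∀ u v : carrier, ∃ N : ℤ, ∀ n : ℤ, N ≤ n → op u n v = 0
  one_op : ∀ (n : ℤ) (v : carrier), op one n v = if n = -1 then v else 0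
  create_nonneg : ∀ (v : carrier) (n : ℤ), 0 ≤ n → op v n one = 0
  create : ∀ v : carrier, op v (-1) one = v
  borcherds : ∀ (u v w : carrier) (l m n : ℤ),
    (∑ᶠ i : ℕ, cchoose m i • op (op u (l + (i : ℤ)) v) (m + n - (i : ℤ)) w)
      = ∑ᶠ i : ℕ, ((-1 : ℂ) ^ i * cchoose l i) •
          (op u (l + m - (i : ℤ)) (op v (n + (i : ℤ)) w)
            - ((-1 : ℂ) ^ l) • op v (l + n - (i : ℤ)) (op u (m + (i : ℤ)) w))
  proj_linear : ∀ n : ℤ, IsLinearMap ℂ (proj n)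
  proj_mem : ∀ (n : ℤ) (v : carrier), proj n v ∈ wtSpace n
  proj_eq : ∀ n : ℤ, ∀ v ∈ wtSpace n, proj n v = v
  proj_ne : ∀ m n : ℤ, m ≠ n → ∀ v ∈ wtSpace m, proj n v = 0
  proj_finite : ∀ v : carrier, (Function.support fun n => proj n v).Finite
  proj_sum : ∀ v : carrier, (∑ᶠ n : ℤ, proj n v) = v
  fd : ∀ n : ℤ, FiniteDimensional ℂ (wtSpace n)
  lower_trunc : ∃ N : ℤ, ∀ n : ℤ, n < N → wtSpace n = ⊥
  one_wt : one ∈ wtSpace 0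
  omega_wt : omega ∈ wtSpace 2
  op_wt : ∀ k m n : ℤ, ∀ u ∈ wtSpace k, ∀ v ∈ wtSpace m, op u n v ∈ wtSpace (k + m - n - 1)
  L_zero : ∀ n : ℤ, ∀ v ∈ wtSpace n, op omega 1 v = (n : ℂ) • v
  L_neg_one : ∀ (u : carrier) (n : ℤ) (w : carrier),
    op (op omega 0 u) n w = (-(n : ℂ)) • op u (n - 1) w
  virasoro : ∀ (m n : ℤ) (v : carrier),
    op omega (m + 1) (op omega (n + 1) v) - op omega (n + 1) (op omega (m + 1) v)
      = ((m : ℂ) - (n : ℂ)) • op omega (m + n + 1) v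
        + (if m + n = 0 then (((m : ℂ) ^ 3 - (m : ℂ)) / 12) * cc else 0) • v

attribute [instance] VOA.grp VOA.mdl

namespace VOA

variable (V : VOA)

/-- The Virasoro operator `L(k) = ω_{k+1}`. -/
def L (k : ℤ) (v : V.carrier) : V.carrier := V.op V.omega (k + 1) v

/-- The positive-weight part `V₊ = ⊕_{n ≥ 1} V₍ₙ₎`. -/
def pos : Submodule ℂ V.carrier := ⨆ (n : ℤ) (_ : 1 ≤ n), V.wtSpace n

/-- Zhu's subspace `C₂(V) = span{u₋₂v : u, v ∈ V}`. -/
def C2 : Submodule ℂ V.carrier :=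
  Submodule.span ℂ {x : V.carrier | ∃ u v : V.carrier, x = V.op u (-2) v}

/-- The subspace `C₁(V) = span(v₋₁V₊ (v ∈ V₊) together with L(-1)V)`. -/
def C1 : Submodule ℂ V.carrier :=
  Submodule.span ℂ
    ({x : V.carrier | ∃ u ∈ V.pos, ∃ v ∈ V.pos, x = V.op u (-1) v}
      ∪ {x : V.carrier | ∃ v : V.carrier, x = V.op V.omega 0 v})

/-- Iterated application of modes: `iterApply [(u¹,n₁),…,(uʳ,n_r)] w = u¹_{n₁} ⋯ uʳ_{n_r} w`. -/
def iterApply : List (V.carrier × ℤ) → V.carrier → V.carrier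
  | [], w => w
  | p :: l, w => V.op p.1 p.2 (iterApply l w)

/-- `U ⊆ V` generates `V` as a vertex operator algebra:  `V` is linearly spanned by
the elements `u¹_{n₁} ⋯ uʳ_{n_r} 1` with `uⁱ ∈ U`, `n_i ∈ ℤ`. -/
def generates (U : Set V.carrier) : Prop :=
  Submodule.span ℂ {x : V.carrier | ∃ l : List (V.carrier × ℤ),
    (∀ p ∈ l, p.1 ∈ U) ∧ x = V.iterApply l V.one} = ⊤

/-- `V` is finitely generated as a vertex operator algebra. -/
def FinitelyGenerated : Prop := ∃ S : Finset V.carrier, V.generates ↑S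

end VOA

/-- A weak `V`-module: all axioms of a module (truncation, vacuum, Jacobi identity in
Borcherds form) except those involving gradings. -/
structure WeakModule (V : VOA) where
  carrier : Type
  [grp : AddCommGroup carrier]
  [mdl : Module ℂ carrier]
  op : V.carrier → ℤ → carrier → carrier
  op_linear_left : ∀ (n : ℤ) (w : carrier), IsLinearMap ℂ fun u => op u n w
  op_linear_right : ∀ (u : V.carrier) (n : ℤ), IsLinearMap ℂ (op u n)
  trunc : ∀ (u : V.carrier) (w : carrier), ∃ N : ℤ, ∀ n : ℤ, N ≤ n → op u n w = 0
  one_op : ∀ (n : ℤ) (w : carrier), op V.one n w = if n = -1 then w else 0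
  borcherds : ∀ (u v : V.carrier) (w : carrier) (l m n : ℤ),
    (∑ᶠ i : ℕ, cchoose m i • op (V.op u (l + (i : ℤ)) v) (m + n - (i : ℤ)) w)
      = ∑ᶠ i : ℕ, ((-1 : ℂ) ^ i * cchoose l i) •
          (op u (l + m - (i : ℤ)) (op v (n + (i : ℤ)) w)
            - ((-1 : ℂ) ^ l) • op v (l + n - (i : ℤ)) (op u (m + (i : ℤ)) w))

attribute [instance] WeakModule.grp WeakModule.mdl

namespace WeakModule

variable {V : VOA} (W : WeakModule V)

/-- `L(0)` acting on a weak module, as a linear map. -/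
def L0 : W.carrier →ₗ[ℂ] W.carrier := IsLinearMap.mk' _ (W.op_linear_right V.omega 1)

/-- The `L(0)`-eigenspace of eigenvalue `h`. -/
def eig (h : ℂ) : Submodule ℂ W.carrier :=
  LinearMap.ker (W.L0 - h • (LinearMap.id : W.carrier →ₗ[ℂ] W.carrier))

/-- The coefficient `v*ₙ` of the adjoint vertex operator
`⟨Y*(v,x)α, w⟩ = ⟨α, Y(e^{xL(1)}(-x^{-2})^{L(0)}v, x^{-1})w⟩` acting on the full dual
space: for `v` homogeneous of weight `h`,
`(v*ₙ α)(w) = (-1)^h Σ_{i≥0} (1/i!) α((L(1)^i v)_{2h-n-i-2} w)`, extended to general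
`v` via the weight-space projections. -/
def dmode (v : V.carrier) (n : ℤ) (α : W.carrier → ℂ) (w : W.carrier) : ℂ :=
  ∑ᶠ h : ℤ, ∑ᶠ i : ℕ,
    ((-1 : ℂ) ^ h / (Nat.factorial i : ℂ)) *
      α (W.op ((V.L 1)^[i] (V.proj h v)) (2 * h - n - (i : ℤ) - 2) w)

/-- `D(W) ⊆ W*`: the linear functionals `α` on `W` such that for every `v ∈ V`,
`Y*(v,x)α ∈ W*((x))`, i.e. `v*ₙ α = 0` for `n` sufficiently large. -/
def DW : Set (W.carrier → ℂ) :=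
  {α | IsLinearMap ℂ α ∧
    ∀ v : V.carrier, ∃ N : ℤ, ∀ n : ℤ, N ≤ n → ∀ w : W.carrier, W.dmode v n α w = 0}

/-- A subspace stable under all modes of all vertex operators, i.e. a `V`-submodule. -/
def IsStable (S : Submodule ℂ W.carrier) : Prop :=
  ∀ (v : V.carrier) (n : ℤ), ∀ m ∈ S, W.op v n m ∈ S

/-- An irreducible (nonzero, no proper nonzero stable subspaces) `V`-submodule. -/
def IsIrreducibleSub (S : Submodule ℂ W.carrier) : Prop :=
  S ≠ ⊥ ∧ W.IsStable S ∧
    ∀ T : Submodule ℂ W.carrier, W.IsStable T → T ≤ S → T = ⊥ ∨ T = S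

/-- A stable subspace which is an ordinary module: `L(0)` acts semisimply on it with
finite-dimensional eigenspaces, and for each `h` the eigenvalues `h + m` do not occur
for `m` a sufficiently negative integer. -/
def IsOrdinarySub (S : Submodule ℂ W.carrier) : Prop :=
  S ≤ (⨆ h : ℂ, W.eig h ⊓ S) ∧ (∀ h : ℂ, FiniteDimensional ℂ ↥(W.eig h ⊓ S)) ∧
    ∀ h : ℂ, ∃ N : ℤ, ∀ m : ℤ, m ≤ N → W.eig (h + (m : ℂ)) ⊓ S = ⊥

/-- The weak module `W` is irreducible. -/
def IsIrreducible : Prop :=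
  (⊥ : Submodule ℂ W.carrier) ≠ ⊤ ∧
    ∀ S : Submodule ℂ W.carrier, W.IsStable S → S = ⊥ ∨ S = ⊤

/-- `Cₙ(W) = span{v₋ₙw : v ∈ V, w ∈ W}`. -/
def Cn (n : ℤ) : Submodule ℂ W.carrier :=
  Submodule.span ℂ {x : W.carrier | ∃ (v : V.carrier) (w : W.carrier), x = W.op v (-n) w}

/-- `B(W) = span(u₋₁W (u ∈ V₊) together with v₀W (v homogeneous, wt v ≥ 2))`. -/
def BW : Submodule ℂ W.carrier :=
  Submodule.span ℂ
    ({x : W.carrier | ∃ v ∈ V.pos, ∃ w : W.carrier, x = W.op v (-1) w}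
      ∪ {x : W.carrier | ∃ k : ℤ, 2 ≤ k ∧ ∃ v ∈ V.wtSpace k, ∃ w : W.carrier, x = W.op v 0 w})

/-- Zhu's subspace `O(W) = span{Σ_{i≥0} C(wt v, i) v_{i-2} w}` so that `A(W) = W/O(W)`. -/
def OW : Submodule ℂ W.carrier :=
  Submodule.span ℂ
    {x : W.carrier | ∃ (k : ℤ) (v : V.carrier), v ∈ V.wtSpace k ∧
      ∃ w : W.carrier, x = ∑ᶠ i : ℕ, cchoose k i • W.op v ((i : ℤ) - 2) w}

/-- A subspace `T ⊇ O(W)` of `W` is closed under the Frenkel–Zhu left and right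
`A(V)`-actions `v * w = Σᵢ C(wt v, i) v_{i-1} w` and `w * v = Σᵢ C(wt v - 1, i) v_{i-1} w`;
for `T ⊇ O(W)` this expresses that `T/O(W)` is an `A(V)`-sub-bimodule of `A(W)`. -/
def BimoduleClosed (T : Submodule ℂ W.carrier) : Prop :=
  ∀ k : ℤ, ∀ v ∈ V.wtSpace k, ∀ w ∈ T,
    (∑ᶠ i : ℕ, cchoose k i • W.op v ((i : ℤ) - 1) w) ∈ T ∧
    (∑ᶠ i : ℕ, cchoose (k - 1) i • W.op v ((i : ℤ) - 1) w) ∈ T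

/-- Equivalence (isomorphism) of weak modules. -/
def Equiv (M N : WeakModule V) : Prop :=
  ∃ e : M.carrier ≃ₗ[ℂ] N.carrier,
    ∀ (v : V.carrier) (n : ℤ) (w : M.carrier), e (M.op v n w) = N.op v n (e w)

end WeakModule

/-- `V` is of class 𝒜: `L(0)` acts semisimply on every weak `V`-module. -/
def VOA.classA (V : VOA) : Prop :=
  ∀ M : WeakModule V, (⨆ h : ℂ, M.eig h) = ⊤

/-- `V` is regular: every weak `V`-module is a direct sum of irreducible ordinary
`V`-modules. -/
def VOA.regular (V : VOA) : Prop :=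
  ∀ M : WeakModule V, ∃ (ι : Type) (S : ι → Submodule ℂ M.carrier),
    (∀ i, M.IsIrreducibleSub (S i) ∧ M.IsOrdinarySub (S i)) ∧
    (∀ i, Disjoint (S i) (⨆ (j : ι) (_ : j ≠ i), S j)) ∧ (⨆ i, S i) = ⊤

/-- A generalized `V`-module: a weak module with a semisimple `L(0)`-action, graded by
the `L(0)`-eigenvalues, with weight-space projections `projW`. -/
structure GenModule (V : VOA) extends WeakModule V where
  wt : ℂ → Submodule ℂ carrier
  projW : ℂ → carrier → carrier
  projW_linear : ∀ h : ℂ, IsLinearMap ℂ (projW h)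
  projW_mem : ∀ (h : ℂ) (w : carrier), projW h w ∈ wt h
  projW_eq : ∀ h : ℂ, ∀ w ∈ wt h, projW h w = w
  projW_ne : ∀ g h : ℂ, g ≠ h → ∀ w ∈ wt g, projW h w = 0
  projW_finite : ∀ w : carrier, (Function.support fun h => projW h w).Finite
  projW_sum : ∀ w : carrier, (∑ᶠ h : ℂ, projW h w) = w
  wt_L0 : ∀ h : ℂ, ∀ w ∈ wt h, op V.omega 1 w = h • w
  wt_op : ∀ k : ℤ, ∀ v ∈ V.wtSpace k, ∀ (h : ℂ) (n : ℤ), ∀ w ∈ wt h,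
    op v n w ∈ wt (h + (k : ℂ) - (n : ℂ) - 1)

/-- An ordinary `V`-module: a generalized module whose weight spaces are
finite-dimensional and whose weights are truncated from below in each coset `h + ℤ`. -/
structure OrdModule (V : VOA) extends GenModule V where
  wt_fd : ∀ h : ℂ, FiniteDimensional ℂ ↥(wt h)
  wt_lower : ∀ h : ℂ, ∃ N : ℤ, ∀ m : ℤ, m ≤ N → wt (h + (m : ℂ)) = ⊥

namespace GenModule

variable {V : VOA} (W : GenModule V)

/-- `W₊ = ⊕_{Re h > 0} W₍ₕ₎`. -/
def posW : Submodule ℂ W.carrier := ⨆ (h : ℂ) (_ : 0 < h.re), W.wt h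

/-- `C₁(W) = span(v₋₁W₊ (v ∈ V₊) together with L(-1)W)`. -/
def C1W : Submodule ℂ W.carrier :=
  Submodule.span ℂ
    ({x : W.carrier | ∃ v ∈ V.pos, ∃ w ∈ W.posW, x = W.op v (-1) w}
      ∪ {x : W.carrier | ∃ w : W.carrier, x = W.op V.omega 0 w})

/-- The restricted dual `W' = ⊕ₕ W₍ₕ₎* ⊆ W*`: the linear functionals vanishing on all
but finitely many weight spaces. -/
def restrictedDual : Set (W.carrier → ℂ) :=
  {α | IsLinearMap ℂ α ∧ {h : ℂ | ∃ w ∈ W.wt h, α w ≠ 0}.Finite}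

end GenModule

/-- `D(W)⁰`: the sum of the `L(0)`-eigenspaces of the weak module `D(W) ⊆ W*`, where
`L*(0) = ω*₁` acts on `α ∈ W*` by `(L*(0)α)(w) = α(L(0)w)`. -/
def OrdModule.DW0 {V : VOA} (W : OrdModule V) : Set (W.carrier → ℂ) :=
  {α | ∃ (S : Finset ℂ) (f : ℂ → (W.carrier → ℂ)),
    (∀ h ∈ S, f h ∈ W.toWeakModule.DW ∧
      ∀ w : W.carrier, f h (W.op V.omega 1 w) = h * f h w) ∧
    α = ∑ h ∈ S, f h}

/-- An ℕ-gradable weak `V`-module: a weak module with an ℕ-grading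
`W = ⊕_{n∈ℕ} W(n)` with `v_m W(n) ⊆ W(wt v + n - m - 1)` (graded pieces of negative
index are zero). -/
structure NGradedModule (V : VOA) extends WeakModule V where
  gr : ℤ → Submodule ℂ carrier
  gr_neg : ∀ n : ℤ, n < 0 → gr n = ⊥
  gr_sup : (⨆ n : ℤ, gr n) = ⊤
  gr_indep : ∀ n : ℤ, Disjoint (gr n) (⨆ (m : ℤ) (_ : m ≠ n), gr m)
  gr_op : ∀ k : ℤ, ∀ v ∈ V.wtSpace k, ∀ m n : ℤ, ∀ w ∈ gr n,
    op v m w ∈ gr (k + n - m - 1)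

/-- An intertwining operator of type `(W₃; W₁ W₂)` in the sense of
Frenkel–Huang–Lepowsky, recorded through its complex-indexed modes
`I w₁ h w₂ = (w₁)ₕ w₂` (so `Y(w₁,x)w₂ = Σ_{h∈ℂ} (w₁)ₕ w₂ x^{-h-1}`):
linearity, truncation, the `L(-1)`-derivative property, and the Jacobi identity in
component (Borcherds) form. -/
def IsIntertwiner {V : VOA} (W1 W2 W3 : OrdModule V)
    (I : W1.carrier → ℂ → W2.carrier → W3.carrier) : Prop :=
  (∀ (h : ℂ) (w2 : W2.carrier), IsLinearMap ℂ fun w1 => I w1 h w2) ∧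
  (∀ (w1 : W1.carrier) (h : ℂ), IsLinearMap ℂ (I w1 h)) ∧
  (∀ (w1 : W1.carrier) (w2 : W2.carrier) (h : ℂ),
    ∃ N : ℤ, ∀ n : ℤ, N ≤ n → I w1 (h + (n : ℂ)) w2 = 0) ∧
  (∀ (w1 : W1.carrier) (h : ℂ) (w2 : W2.carrier),
    I (W1.op V.omega 0 w1) h w2 = (-h) • I w1 (h - 1) w2) ∧
  (∀ (u : V.carrier) (w1 : W1.carrier) (w2 : W2.carrier) (l m : ℤ) (h : ℂ),
    (∑ᶠ i : ℕ, cchoose m i • I (W1.op u (l + (i : ℤ)) w1) ((m : ℂ) + h - (i : ℂ)) w2)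
      = ∑ᶠ i : ℕ, ((-1 : ℂ) ^ i * cchoose l i) •
          (W3.op u (l + m - (i : ℤ)) (I w1 (h + (i : ℂ)) w2)
            - ((-1 : ℂ) ^ l) • I w1 ((l : ℂ) + h - (i : ℂ)) (W2.op u (m + (i : ℤ)) w2)))

/-- The fusion rule `dim I(W₃; W₁W₂)` is finite: the space of intertwining operators of
the indicated type is finite-dimensional. -/
def FusionFinite {V : VOA} (W1 W2 W3 : OrdModule V) : Prop :=
  FiniteDimensional ℂ
    ↥(Submodule.span ℂ {I : W1.carrier → ℂ → W2.carrier → W3.carrier |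
        IsIntertwiner W1 W2 W3 I})

end

/-!
Let `T ⊇ W⁰` be closed under both actions; induct on the weight, which is bounded below in each
coset of `ℤ`.  If `T` already contains everything of weight `g - m` with `m > 0` and `w` is
homogeneous, then the left action `v * w = ∑ᵢ C(wt v, i) v_{i-1} w` is `v_{-1} w` plus terms of
lower weight, and the commutator `v * w - w * v = ∑ᵢ C(wt v - 1, i - 1) v_{i-1} w` is `v_0 w` plus
terms of lower weight.  So `T` contains the weight-`g` part of `B(W)`, and hence that of
`W = W⁰ + B(W)`.  If `W / B(W)` is finite-dimensional, the homogeneous components of finitely many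
representatives span a suitable `W⁰`.
-/

theorem apply_mem_of_finsum_mem {ι M S : Type*} [AddCommGroup M] [SetLike S M]
    [AddSubgroupClass S M] {T : S} {f : ι → M} {j : ι} (hf : f.HasFiniteSupport)
    (hsum : ∑ᶠ i, f i ∈ T) (hne : ∀ i, i ≠ j → f i ∈ T) : f j ∈ T := by
  rw [← add_finsum_cond_ne j hf] at hsum
  refine (add_mem_cancel_right ?_).1 hsum
  exact finsum_induction (· ∈ T) (zero_mem T) (fun _ _ => add_mem) fun i =>
    finsum_induction (· ∈ T) (zero_mem T) (fun _ _ => add_mem) (hne i)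

theorem exists_finset_span_sup_eq_top {K M : Type*} [DivisionRing K] [AddCommGroup M] [Module K M]
    (N : Submodule K M) [FiniteDimensional K (M ⧸ N)] :
    ∃ s : Finset M, Submodule.span K (s : Set M) ⊔ N = ⊤ := by
  obtain ⟨C, hC⟩ := N.exists_isCompl
  have : Module.Finite K C := Module.Finite.equiv (N.quotientEquivOfIsCompl C hC)
  obtain ⟨s, rfl⟩ := Module.Finite.iff_fg.1 this
  exact ⟨s, hC.symm.sup_eq_top⟩

theorem cchoose_zero_right (m : ℤ) : cchoose m 0 = 1 := by simp [cchoose]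

theorem cchoose_one_right (m : ℤ) : cchoose m 1 = m := by simp [cchoose]

namespace WeakModule

theorem hasFiniteSupport_smul_op {V : VOA} (W : WeakModule V) (c : ℕ → ℂ) (v : V.carrier) (n : ℤ)
    (w : W.carrier) : (fun i : ℕ => c i • W.op v (i - n) w).HasFiniteSupport := by
  obtain ⟨N, hN⟩ := W.trunc v w
  refine (Set.finite_lt_nat (N + n).toNat).subset fun i hi => ?_
  contrapose! hi
  have hle : N ≤ i - n := by simp only [Set.mem_ofPred_eq, not_lt] at hi; omega
  simp [hN _ hle]

theorem BimoduleClosed.finsum_sub_mem {V : VOA} {W : WeakModule V} {T : Submodule ℂ W.carrier}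
    (hT : W.BimoduleClosed T) {k : ℤ} {v : V.carrier} (hv : v ∈ V.wtSpace k) {w : W.carrier}
    (hw : w ∈ T) : ∑ᶠ i : ℕ, (cchoose k i - cchoose (k - 1) i) • W.op v (i - 1) w ∈ T := by
  simp only [sub_smul]
  rw [finsum_sub_distrib (W.hasFiniteSupport_smul_op _ v 1 w)
    (W.hasFiniteSupport_smul_op _ v 1 w)]
  exact T.sub_mem (hT k v hv w hw).1 (hT k v hv w hw).2

end WeakModule

namespace GenModule

variable {V : VOA} (W : GenModule V)

/-- The projection of `W` onto its weight space `W₍ₕ₎`, bundled as a linear map. -/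
def projWₗ (h : ℂ) : W.carrier →ₗ[ℂ] W.carrier := (W.projW_linear h).mk'

/-- A subspace `S` is graded, i.e. `S = ⊕ₕ (S ∩ W₍ₕ₎)`; encoded as stability under the weight
projections. -/
def IsGraded (S : Submodule ℂ W.carrier) : Prop := ∀ w ∈ S, ∀ h : ℂ, W.projW h w ∈ S

theorem mem_of_forall_projW_mem {S : Submodule ℂ W.carrier} {w : W.carrier}
    (hw : ∀ h : ℂ, W.projW h w ∈ S) : w ∈ S := by
  rw [← W.projW_sum w]
  exact finsum_induction (· ∈ S) S.zero_mem (fun _ _ => S.add_mem) hw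

theorem eq_top_of_forall_wt_le {S : Submodule ℂ W.carrier} (hS : ∀ h : ℂ, W.wt h ≤ S) : S = ⊤ :=
  (Submodule.eq_top_iff').2 fun w => W.mem_of_forall_projW_mem fun h => hS h (W.projW_mem h w)

theorem isGraded_span {s : Set W.carrier} (hs : ∀ x ∈ s, ∃ h : ℂ, x ∈ W.wt h) :
    W.IsGraded (Submodule.span ℂ s) := by
  intro w hw g
  suffices hle : Submodule.span ℂ s ≤ (Submodule.span ℂ s).comap (W.projWₗ g) from hle hw
  refine Submodule.span_le.2 fun x hx => ?_
  change W.projW g x ∈ Submodule.span ℂ s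
  obtain ⟨h, hxh⟩ := hs x hx
  rcases eq_or_ne h g with rfl | hne
  · rw [W.projW_eq h x hxh]
    exact Submodule.subset_span hx
  · rw [W.projW_ne h g hne x hxh]
    exact Submodule.zero_mem _

theorem finite_range_projW (w : W.carrier) : (Set.range fun h => W.projW h w).Finite :=
  (((W.projW_finite w).image _).insert 0).subset (Function.range_subset_insert_image_support _)

theorem exists_finset_isGraded_span_ge (s : Finset W.carrier) :
    ∃ t : Finset W.carrier, W.IsGraded (Submodule.span ℂ (t : Set W.carrier)) ∧
      Submodule.span ℂ (s : Set W.carrier) ≤ Submodule.span ℂ (t : Set W.carrier) := by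
  have hfin : (⋃ w ∈ s, Set.range fun h => W.projW h w).Finite :=
    s.finite_toSet.biUnion fun w _ => W.finite_range_projW w
  refine ⟨hfin.toFinset, ?_, ?_⟩ <;> rw [hfin.coe_toFinset]
  · refine W.isGraded_span fun x hx => ?_
    obtain ⟨w, -, h, rfl⟩ := Set.mem_iUnion₂.1 hx
    exact ⟨h, W.projW_mem h w⟩
  · exact Submodule.span_le.2 fun w hw => W.mem_of_forall_projW_mem fun h =>
      Submodule.subset_span (Set.mem_biUnion hw ⟨h, rfl⟩)

theorem hom_ext {M : Type*} [AddCommGroup M] [Module ℂ M] {f f' : W.carrier →ₗ[ℂ] M}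
    (hff' : ∀ h : ℂ, ∀ w ∈ W.wt h, f w = f' w) : f = f' :=
  LinearMap.eqLocus_eq_top.1 (W.eq_top_of_forall_wt_le hff')

theorem projW_op {k : ℤ} {v : V.carrier} (hv : v ∈ V.wtSpace k) (g : ℂ) (n : ℤ) (w : W.carrier) :
    W.projW g (W.op v n w) = W.op v n (W.projW (g - k + n + 1) w) := by
  let vₙ : W.carrier →ₗ[ℂ] W.carrier := (W.op_linear_right v n).mk'
  refine LinearMap.congr_fun (f := W.projWₗ g ∘ₗ vₙ) (g := vₙ ∘ₗ W.projWₗ (g - k + n + 1))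
    (W.hom_ext fun h w hw => ?_) w
  change W.projW g (W.op v n w) = W.op v n (W.projW (g - k + n + 1) w)
  have hop := W.wt_op k v hv h n w hw
  by_cases hg : h = g - k + n + 1
  · subst hg
    rw [W.projW_eq _ w hw, W.projW_eq]
    convert hop using 2
    ring
  · have hg' : h + k - n - 1 ≠ g := fun he => hg (by linear_combination he)
    rw [W.projW_ne _ _ hg _ hw, W.projW_ne _ _ hg' _ hop, (W.op_linear_right v n).map_zero]

section LowerWeights

variable {W} {g : ℂ} {T : Submodule ℂ W.carrier} {k : ℤ} {v : V.carrier} {w : W.carrier}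

theorem op_mem_of_finsum_mem (hlow : ∀ m : ℤ, 0 < m → W.wt (g - m) ≤ T) (hv : v ∈ V.wtSpace k)
    {j : ℕ} (hw : w ∈ W.wt (g - k + j)) {c : ℕ → ℂ} (hc : ∀ i < j, c i = 0) (hcj : c j ≠ 0)
    (hsum : ∑ᶠ i : ℕ, c i • W.op v (i - 1) w ∈ T) : W.op v (j - 1) w ∈ T := by
  refine (T.smul_mem_iff hcj).1
    (apply_mem_of_finsum_mem (f := fun i : ℕ => c i • W.op v (i - 1) w)
      (W.hasFiniteSupport_smul_op c v 1 w) hsum fun i hij => ?_)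
  rcases hij.lt_or_gt with hlt | hgt
  · simp [hc i hlt]
  · refine T.smul_mem _ (hlow (i - j) (by omega) ?_)
    convert W.wt_op k v hv _ (i - 1) w hw using 2
    push_cast
    ring

theorem op_neg_one_mem (hT : W.BimoduleClosed T) (hlow : ∀ m : ℤ, 0 < m → W.wt (g - m) ≤ T)
    (hk : 1 ≤ k) (hv : v ∈ V.wtSpace k) (hw : w ∈ W.wt (g - k)) : W.op v (-1) w ∈ T := by
  have hwT : w ∈ T := hlow k hk hw
  simpa using op_mem_of_finsum_mem (j := 0) hlow hv (by simpa using hw) (by simp)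
    (by simp [cchoose_zero_right]) (hT k v hv w hwT).1

theorem op_zero_mem (hT : W.BimoduleClosed T) (hlow : ∀ m : ℤ, 0 < m → W.wt (g - m) ≤ T)
    (hk : 2 ≤ k) (hv : v ∈ V.wtSpace k) (hw : w ∈ W.wt (g - k + 1)) : W.op v 0 w ∈ T := by
  have hwT : w ∈ T := by
    refine hlow (k - 1) (by omega) ?_
    convert hw using 2
    push_cast
    ring
  simpa using op_mem_of_finsum_mem (j := 1) hlow hv (by simpa using hw)
    (by simp [cchoose_zero_right]) (by simp [cchoose_one_right]) (hT.finsum_sub_mem hv hwT)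

theorem projW_mem_of_mem_BW (hT : W.BimoduleClosed T)
    (hlow : ∀ m : ℤ, 0 < m → W.wt (g - m) ≤ T) {b : W.carrier} (hb : b ∈ W.BW) :
    W.projW g b ∈ T := by
  suffices hle : W.BW ≤ T.comap (W.projWₗ g) from hle hb
  refine Submodule.span_le.2 ?_
  rintro _ (⟨v, hv, w, rfl⟩ | ⟨k, hk, v, hv, w, rfl⟩)
  · suffices hle : V.pos ≤ T.comap (W.projWₗ g ∘ₗ (W.op_linear_left (-1) w).mk') from hle hv
    refine iSup₂_le fun k hk v hv => ?_
    change W.projW g (W.op v (-1) w) ∈ T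
    rw [W.projW_op hv]
    exact op_neg_one_mem hT hlow hk hv (by simpa using W.projW_mem (g - k + (-1 : ℤ) + 1) w)
  · change W.projW g (W.op v 0 w) ∈ T
    rw [W.projW_op hv]
    exact op_zero_mem hT hlow hk hv (by simpa using W.projW_mem (g - k + (0 : ℤ) + 1) w)

theorem wt_le_of_sup_BW_eq_top {W0 : Submodule ℂ W.carrier} (hgraded : W.IsGraded W0)
    (hsup : W0 ⊔ W.BW = ⊤) (hW0 : W0 ≤ T) (hT : W.BimoduleClosed T)
    (hlow : ∀ m : ℤ, 0 < m → W.wt (g - m) ≤ T) : W.wt g ≤ T := by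
  intro w hw
  obtain ⟨a, ha, b, hb, rfl⟩ := Submodule.mem_sup.1 (hsup ▸ Submodule.mem_top : w ∈ W0 ⊔ W.BW)
  rw [← W.projW_eq g _ hw, (W.projW_linear g).map_add]
  exact T.add_mem (hW0 (hgraded a ha g)) (projW_mem_of_mem_BW hT hlow hb)

end LowerWeights

theorem eq_top_of_lower_wt_induction
    (hlower : ∀ h : ℂ, ∃ N : ℤ, ∀ m : ℤ, m ≤ N → W.wt (h + m) = ⊥) {T : Submodule ℂ W.carrier}
    (hstep : ∀ g : ℂ, (∀ m : ℤ, 0 < m → W.wt (g - m) ≤ T) → W.wt g ≤ T) : T = ⊤ := by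
  refine W.eq_top_of_forall_wt_le fun h => ?_
  obtain ⟨N, hN⟩ := hlower h
  suffices hle : ∀ n : ℤ, W.wt (h + n) ≤ T by simpa using hle 0
  intro n
  induction n using Int.strongRec (m := N) with
  | lt n hn => exact (hN n hn.le).trans_le bot_le
  | ge n _ ih =>
    refine hstep _ fun m hm => ?_
    convert ih (n - m) (by omega) using 2
    push_cast
    ring

theorem eq_top_of_bimoduleClosed
    (hlower : ∀ h : ℂ, ∃ N : ℤ, ∀ m : ℤ, m ≤ N → W.wt (h + m) = ⊥) {W0 T : Submodule ℂ W.carrier}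
    (hgraded : W.IsGraded W0) (hsup : W0 ⊔ W.BW = ⊤) (hW0 : W0 ≤ T) (hT : W.BimoduleClosed T) :
    T = ⊤ :=
  W.eq_top_of_lower_wt_induction hlower fun _ =>
    wt_le_of_sup_BW_eq_top hgraded hsup hW0 hT

end GenModule

theorem AW_generated_by_complement_of_BW_general {V : VOA} (W : GenModule V)
    (hlower : ∀ h : ℂ, ∃ N : ℤ, ∀ m : ℤ, m ≤ N → W.wt (h + m) = ⊥) :
    (∀ W0 : Submodule ℂ W.carrier, W.IsGraded W0 → W0 ⊔ W.BW = ⊤ →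
      ∀ T : Submodule ℂ W.carrier, W0 ≤ T → W.BimoduleClosed T → T = ⊤) ∧
    (FiniteDimensional ℂ (W.carrier ⧸ W.BW) →
      ∃ S : Finset W.carrier, ∀ T : Submodule ℂ W.carrier,
        ↑S ⊆ (T : Set W.carrier) → W.BimoduleClosed T → T = ⊤) := by
  refine ⟨fun W0 hgraded hsup T hW0 hT =>
    W.eq_top_of_bimoduleClosed hlower hgraded hsup hW0 hT, fun _ => ?_⟩
  obtain ⟨s, hs⟩ := exists_finset_span_sup_eq_top W.BW
  obtain ⟨S, hgraded, hle⟩ := W.exists_finset_isGraded_span_ge s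
  have hsup : Submodule.span ℂ (S : Set W.carrier) ⊔ W.BW = ⊤ :=
    top_unique (hs.ge.trans (sup_le_sup_right hle _))
  exact ⟨S, fun T hST hT =>
    W.eq_top_of_bimoduleClosed hlower hgraded hsup (Submodule.span_le.2 hST) hT⟩

/-- Let `V = ⊕_{n∈ℕ} V₍ₙ₎` with `V₍₀₎ = ℂ1`, and let `W` be an
ordinary `V`-module with `W = ⊕_{n∈ℕ} W₍ₕ₊ₙ₎` for some `h ∈ ℂ`.  Let `W⁰` be a graded
subspace of `W` with `W = W⁰ + B(W)`.  Then the image of `W⁰` in `A(W) = W/O(W)`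
generates `A(W)` as an `A(V)`-bimodule — that is, every subspace `T ⊆ W` containing
`O(W)` and `W⁰` whose image in `A(W)` is closed under the Frenkel–Zhu left and right
`A(V)`-actions equals `W`.  In particular, if `dim W/B(W) < ∞`, then `A(W)` is a
finitely generated `A(V)`-bimodule. -/
theorem AW_generated_by_complement_of_BW (V : VOA)
    (hneg : ∀ n : ℤ, n < 0 → V.wtSpace n = ⊥)
    (h0 : V.wtSpace 0 = Submodule.span ℂ {V.one})
    (W : OrdModule V) (h : ℂ)
    (hwts : ∀ g : ℂ, W.wt g ≠ ⊥ → ∃ n : ℕ, g = h + (n : ℂ))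
    (W0 : Submodule ℂ W.carrier)
    (hW0graded : ∀ w ∈ W0, ∀ g : ℂ, W.projW g w ∈ W0)
    (hW0sum : W0 ⊔ W.toGenModule.toWeakModule.BW = ⊤) :
    (∀ T : Submodule ℂ W.carrier,
      W.toGenModule.toWeakModule.OW ≤ T → W0 ≤ T →
      W.toGenModule.toWeakModule.BimoduleClosed T → T = ⊤) ∧
    (FiniteDimensional ℂ (W.carrier ⧸ W.toGenModule.toWeakModule.BW) →
      ∃ S : Finset W.carrier, ∀ T : Submodule ℂ W.carrier,
        W.toGenModule.toWeakModule.OW ≤ T → ↑S ⊆ (T : Set W.carrier) →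
        W.toGenModule.toWeakModule.BimoduleClosed T → T = ⊤) := by
  obtain ⟨hgen, hfg⟩ := AW_generated_by_complement_of_BW_general W.toGenModule W.wt_lower
  exact ⟨fun T _ => hgen W0 hW0graded hW0sum T, fun hfd => (hfg hfd).imp fun _ hS T _ => hS T⟩
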